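/- The double integral ∫₀^∞ ∫₀^∞ cos((π/2)(3x² − y²/3)) · cos(π x y) / (cosh(π x) cosh(π y)) dx dy equals (√3 − 1)/(2√6). -/

import Mathlib

open Real MeasureTheory

open FourierTransform Filter Topology

/-!
Write `sech x = 1 / cosh (π x)` and `e(x) = exp (3πi x² / 2)`. By parity, four times the integral
is the real part of `J = ∫ e(x) sech x E(x) dx`, where
`E(x) = ∫ exp (-πi y² / 6 + πi x y) sech y dy` is a Mordell integral.

* Since `sech` is its own Fourier transform (`fourier_sech`, a form of Euler's reflection formula),
  Parseval's identity against a Gaussian, continued to an imaginary Gaussian parameter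
  (`sech_fresnel_duality`), turns `E(x)` into a constant times `∫ e(q) sech ((q + x) / 2) dq`.
  Averaging over `q ↦ -q` gives (`inner_integral`)
  `E(x) = k ∫ e(q) cosh (πx/2) cosh (πq/2) / (cosh (πx) + cosh (πq)) dq`, with `k = (i/6)^(-1/2)`.
* The resulting kernel `e(x) e(q) cosh (πx/2) cosh (πq/2) / (cosh (πx) (cosh (πx) + cosh (πq)))`
  is absolutely integrable on the plane, and adding to it its reflection in `x ↔ q` makes it a
  product, because `1 / (a (a + b)) + 1 / (b (a + b)) = 1 / (a b)`. Hence `J = k P² / 2` with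
  `P = ∫ e(x) cosh (πx/2) sech x dx` (`integral_kern`).
* `P` is elementary (`mordell_value`). For `Re b > 0`, the integral
  `∫ exp (-π b x² - πi b x) sech x dx` equals `exp (-π b / 4)`: Parseval reduces it to
  `∫ exp (-π s² / b - π s) sech s ds`, and averaging over `s ↦ -s` cancels `sech`. Adding the
  integral with an additional factor `exp (2 π x)` again cancels `sech` and leaves a Gaussian, and
  `b → -3i/2` yields `P`.
-/

/-! ### The hyperbolic secant and its Fourier transform -/

/-- The hyperbolic secant, normalized so that it is its own Fourier transform. -/
noncomputable def sech (x : ℝ) : ℝ := 1 / Real.cosh (π * x)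


lemma one_add_half_sq_le_cosh (x : ℝ) : 1 + x ^ 2 / 2 ≤ Real.cosh x := by
  have h := Real.cosh_sq' (x / 2)
  have h2 : Real.cosh x = 1 + 2 * Real.sinh (x / 2) ^ 2 := by
    have := Real.cosh_two_mul (x / 2)
    rw [mul_div_cancel₀ x two_ne_zero] at this
    linarith
  have h3 : (x / 2) ^ 2 ≤ Real.sinh (x / 2) ^ 2 := by
    rw [sq_le_sq]
    have := Real.self_le_sinh_iff (x := |x / 2|)
    rw [← Real.abs_sinh] at this
    simpa using this.2 (abs_nonneg _)
  nlinarith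

lemma sech_pos (x : ℝ) : 0 < sech x := by
  unfold sech; have := Real.cosh_pos (π * x); positivity

lemma sech_le (x : ℝ) : sech x ≤ 1 := by
  unfold sech
  rw [div_le_one (Real.cosh_pos _)]; exact Real.one_le_cosh _

lemma sech_neg (x : ℝ) : sech (-x) = sech x := by
  simp [sech]

@[fun_prop]
lemma continuous_sech : Continuous sech := by
  unfold sech
  exact continuous_const.div (by fun_prop) fun x => (Real.cosh_pos _).ne'

lemma integrable_sech_half : Integrable fun x : ℝ => 1 / Real.cosh (π * x / 2) := by
  refine integrable_inv_one_add_sq.mono' ?_ ?_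
  · exact (Continuous.div continuous_const (by fun_prop)
      fun x => (Real.cosh_pos _).ne').aestronglyMeasurable
  · refine Eventually.of_forall fun x => ?_
    rw [Real.norm_of_nonneg (by have := Real.cosh_pos (π * x / 2); positivity), one_div]
    apply inv_anti₀ (by positivity)
    have h := one_add_half_sq_le_cosh (π * x / 2)
    have hpi := Real.pi_gt_three
    nlinarith [mul_nonneg (sq_nonneg x) (by nlinarith : (0:ℝ) ≤ π ^ 2 - 8)]

lemma integrable_sech : Integrable sech := by
  refine integrable_sech_half.mono' continuous_sech.aestronglyMeasurable ?_
  refine Eventually.of_forall fun x => ?_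
  rw [Real.norm_of_nonneg (sech_pos x).le, sech]
  apply one_div_le_one_div_of_le (Real.cosh_pos _)
  rw [Real.cosh_le_cosh, abs_div]
  have := abs_nonneg (π * x)
  rw [abs_of_pos (two_pos : (0:ℝ) < 2)]
  linarith

lemma integrable_sechC : Integrable fun x : ℝ => (sech x : ℂ) := integrable_sech.ofReal

lemma cosh_mul_sech_le (x : ℝ) :
    Real.cosh (π * x / 2) * sech x ≤ 1 / Real.cosh (π * x / 2) := by
  have h1 := Real.one_le_cosh (π * x / 2)
  have h : Real.cosh (π * x) = 2 * Real.cosh (π * x / 2) ^ 2 - 1 := by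
    have h' := Real.cosh_two_mul (π * x / 2)
    have := Real.cosh_sq' (π * x / 2)
    rw [mul_div_cancel₀ _ two_ne_zero] at h'
    linarith
  unfold sech
  rw [mul_one_div, div_le_div_iff₀ (Real.cosh_pos _) (by linarith), h]
  nlinarith

lemma integrable_cosh_sech : Integrable fun x : ℝ => Real.cosh (π * x / 2) * sech x := by
  refine integrable_sech_half.mono' (by fun_prop) ?_
  refine Eventually.of_forall fun x => ?_
  rw [Real.norm_of_nonneg (by have := sech_pos x; have := Real.cosh_pos (π * x / 2); positivity)]
  exact cosh_mul_sech_le x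

/-- The integrand of the beta function `B(u, 1 - u)` under the substitution by the
logistic function. -/
lemma sigmoid_beta (u : ℂ) (x : ℝ) :
    ((Real.sigmoid (2 * π * x) : ℝ) : ℂ) ^ u * ((1 - Real.sigmoid (2 * π * x) : ℝ) : ℂ) ^ (1 - u)
      = Complex.exp (2 * π * x * (u - 1 / 2)) * (sech x / 2 : ℝ) := by
  set w := π * x with hw
  have hc := Real.cosh_pos w
  have h1 : Real.sigmoid (2 * π * x) = Real.exp w / (2 * Real.cosh w) := by
    rw [Real.sigmoid_def, Real.cosh_eq, show -(2 * π * x) = -w - w by rw [hw]; ring, Real.exp_sub,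
      ]
    have := Real.exp_pos w
    have := Real.exp_pos (-w)
    field_simp
  have h2 : 1 - Real.sigmoid (2 * π * x) = Real.exp (-w) / (2 * Real.cosh w) := by
    rw [h1, Real.cosh_eq]
    have := Real.exp_pos w
    have := Real.exp_pos (-w)
    field_simp
    ring
  have e : sech x / 2 = Real.exp (-Real.log (2 * Real.cosh w)) := by
    rw [Real.exp_neg, Real.exp_log (by positivity), sech, ← hw]
    field_simp
  rw [h2, h1, Complex.cpow_def_of_ne_zero (by exact_mod_cast (by positivity)),
    Complex.cpow_def_of_ne_zero (by exact_mod_cast (by positivity)),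
    ← Complex.ofReal_log (by positivity), ← Complex.ofReal_log (by positivity),
    Real.log_div (by positivity) (by positivity), Real.log_div (by positivity) (by positivity),
    Real.log_exp, Real.log_exp, e, Complex.ofReal_exp, ← Complex.exp_add, ← Complex.exp_add, hw]
  congr 1
  push_cast
  ring

/-- The substitution `s = 1 / (1 + exp (-2πx))` turns the transform at `t` into
`B(1/2 - it, 1/2 + it) / π = 1 / sin (π (1/2 - it))`. -/
lemma fourier_sech : 𝓕 (fun x : ℝ => (sech x : ℂ)) = fun t : ℝ => (sech t : ℂ) := by
  ext t
  rw [Real.fourier_eq']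
  set u : ℂ := 1 / 2 - t * Complex.I with hu
  have hure : u.re = 1 / 2 := by simp [hu]
  have hB : Complex.betaIntegral u (1 - u) = π / Complex.sin (π * u) := by
    rw [← Complex.Gamma_mul_Gamma_one_sub, Complex.Gamma_mul_Gamma_eq_betaIntegral (by rw [hure]; norm_num)
      (by rw [Complex.sub_re, hure]; norm_num)]
    simp
  have hB2 : Complex.betaIntegral u (1 - u) = ∫ x : ℝ,
      ((Real.sigmoid x : ℝ) : ℂ) ^ u * ((1 - Real.sigmoid x : ℝ) : ℂ) ^ (1 - u) := by
    rw [Complex.betaIntegral, intervalIntegral.integral_of_le zero_le_one,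
      integral_Ioc_eq_integral_Ioo, ← Real.range_sigmoid, ← Set.image_univ,
      integral_image_eq_integral_abs_deriv_smul MeasurableSet.univ
        (fun x _ => (Real.hasDerivAt_sigmoid x).hasDerivWithinAt)
        Real.sigmoid_injective.injOn, setIntegral_univ]
    congr 1
    ext x
    have h0 := Real.sigmoid_pos x
    have h1 := Real.sigmoid_lt_one x
    have h1' : 0 < 1 - Real.sigmoid x := by linarith
    have a : (((Real.sigmoid x : ℝ) : ℂ)) ≠ 0 := by exact_mod_cast h0.ne'
    have b : (((1 - Real.sigmoid x : ℝ) : ℂ)) ≠ 0 := by exact_mod_cast h1'.ne'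
    rw [abs_of_pos (by positivity), Complex.real_smul, Complex.cpow_sub _ _ a,
      ← Complex.ofReal_one, ← Complex.ofReal_sub,  Complex.cpow_sub _ _ b]
    simp only [Complex.ofReal_mul, Complex.ofReal_one, Complex.cpow_one]
    rw [Complex.cpow_sub _ _ b, Complex.cpow_one]
    field_simp
  have hB3 : (∫ x : ℝ, ((Real.sigmoid (2 * π * x) : ℝ) : ℂ) ^ u *
      ((1 - Real.sigmoid (2 * π * x) : ℝ) : ℂ) ^ (1 - u)) =
      ((2 * π)⁻¹ : ℝ) * Complex.betaIntegral u (1 - u) := by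
    rw [hB2, Measure.integral_comp_mul_left (fun x : ℝ => ((Real.sigmoid x : ℝ) : ℂ) ^ u *
      ((1 - Real.sigmoid x : ℝ) : ℂ) ^ (1 - u)) (2 * π), abs_of_pos (by positivity),
      Complex.real_smul]
  simp_rw [sigmoid_beta] at hB3
  have hs : Complex.sin (π * u) = Real.cosh (π * t) := by
    rw [hu, show (π : ℂ) * (1 / 2 - t * Complex.I) = π / 2 - (π * t) * Complex.I by ring,
      Complex.sin_pi_div_two_sub, Complex.cos_mul_I]
    push_cast; rfl
  have : (∫ v : ℝ, Complex.exp (↑(-2 * π * inner ℝ v t) * Complex.I) • (sech v : ℂ)) =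
      2 * ∫ x : ℝ, Complex.exp (2 * π * x * (u - 1 / 2)) * (sech x / 2 : ℝ) := by
    rw [← integral_const_mul]
    congr 1
    ext v
    simp only [smul_eq_mul, hu]
    rw [show ((-2 * π * inner ℝ v t : ℝ) : ℂ) * Complex.I =
      2 * π * v * (1 / 2 - t * Complex.I - 1 / 2) by simp; ring]
    push_cast; ring
  rw [this, hB3, hB, hs, sech]
  have : (π : ℂ) ≠ 0 := by exact_mod_cast Real.pi_ne_zero
  push_cast
  field_simp

/-! ### Mordell integrals by Parseval -/

/-- Parseval for `sech` and a Gaussian: the transformation law of the Mordell integral under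
`τ ↦ -1/τ`, where `τ = i b`. -/
lemma sech_gaussian_duality {b : ℂ} (hb : 0 < b.re) (c : ℂ) :
    ∫ t : ℝ, (sech t : ℂ) * Complex.exp (-π * b * t ^ 2 + 2 * π * c * t) =
      1 / b ^ (1 / 2 : ℂ) * ∫ s : ℝ, (sech s : ℂ) *
        Complex.exp (-π / b * (s + Complex.I * c) ^ 2) := by
  have hg : Integrable fun t : ℝ => Complex.exp (-π * b * t ^ 2 + 2 * π * c * t) := by
    have := integrable_cexp_quadratic (b := π * b) (by
      rw [Complex.re_ofReal_mul]; exact mul_pos Real.pi_pos hb) (2 * π * c) 0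
    simpa using this
  have key : ∫ t : ℝ, 𝓕 (fun x : ℝ => (sech x : ℂ)) t •
        Complex.exp (-π * b * t ^ 2 + 2 * π * c * t) =
      ∫ s : ℝ, (sech s : ℂ) •
        𝓕 (fun t : ℝ => Complex.exp (-π * b * t ^ 2 + 2 * π * c * t)) s := by
    simpa using! VectorFourier.integral_fourierIntegral_smul_eq_flip (L := innerₗ ℝ)
      Real.continuous_fourierChar continuous_inner integrable_sechC hg
  rw [fourier_sech, fourier_gaussian_pi' hb c] at key
  simp only [smul_eq_mul] at key
  rw [key, ← integral_const_mul]
  congr 1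
  ext s
  ring

/-- The case of a purely imaginary parameter, where the Gaussian is not integrable: it follows from
`sech_gaussian_duality` at `ε + iβ` as `ε → 0⁺`, by dominated convergence with majorant `sech`. -/
lemma sech_fresnel_duality {β : ℝ} (hβ : β ≠ 0) (y : ℝ) :
    ∫ t : ℝ, (sech t : ℂ) * Complex.exp (-π * (β * Complex.I) * t ^ 2 + 2 * π * (y * Complex.I) * t)
      = 1 / (β * Complex.I) ^ (1 / 2 : ℂ) * ∫ s : ℝ, (sech s : ℂ) *
        Complex.exp (-π / (β * Complex.I) * (s - y) ^ 2) := by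
  have hb0 : (β * Complex.I : ℂ) ≠ 0 := by simpa using hβ
  have hne : ∀ ε : ℝ, (ε + β * Complex.I : ℂ) ≠ 0 := fun ε h => hβ (by
    simpa using congrArg Complex.im h)
  have hlim : Tendsto (fun ε : ℝ => (ε + β * Complex.I : ℂ)) (𝓝[>] 0) (𝓝 (β * Complex.I)) := by
    have : Continuous fun ε : ℝ => (ε + β * Complex.I : ℂ) := by fun_prop
    simpa using (this.tendsto 0).mono_left nhdsWithin_le_nhds
  have h1 : Tendsto (fun ε : ℝ => ∫ t : ℝ, (sech t : ℂ) *
      Complex.exp (-π * (ε + β * Complex.I) * t ^ 2 + 2 * π * (y * Complex.I) * t)) (𝓝[>] 0)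
      (𝓝 (∫ t : ℝ, (sech t : ℂ) *
        Complex.exp (-π * (β * Complex.I) * t ^ 2 + 2 * π * (y * Complex.I) * t))) := by
    refine tendsto_integral_filter_of_dominated_convergence sech ?_ ?_ integrable_sech ?_
    · exact Eventually.of_forall fun ε => Continuous.aestronglyMeasurable (by fun_prop)
    · filter_upwards [self_mem_nhdsWithin] with ε hε
      refine Eventually.of_forall fun t => ?_
      rw [norm_mul, Complex.norm_real, Real.norm_of_nonneg (sech_pos t).le, Complex.norm_exp]
      refine mul_le_of_le_one_right (sech_pos t).le (Real.exp_le_one_iff.2 ?_)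
      have : (-π * (ε + β * Complex.I) * t ^ 2 + 2 * π * (y * Complex.I) * t : ℂ).re
          = -(π * ε * t ^ 2) := by
        simp [← Complex.ofReal_pow]
      rw [this]
      have hε' : (0:ℝ) < ε := hε
      have := Real.pi_pos
      simp only [Left.neg_nonpos_iff]; positivity
    · refine Eventually.of_forall fun t => ?_
      exact tendsto_const_nhds.mul ((Complex.continuous_exp.tendsto _).comp
        (((tendsto_const_nhds.mul hlim).mul tendsto_const_nhds).add tendsto_const_nhds))
  have h2 : Tendsto (fun ε : ℝ => ∫ s : ℝ, (sech s : ℂ) *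
      Complex.exp (-π / (ε + β * Complex.I) * (s + Complex.I * (y * Complex.I)) ^ 2)) (𝓝[>] 0)
      (𝓝 (∫ s : ℝ, (sech s : ℂ) *
        Complex.exp (-π / (β * Complex.I) * (s + Complex.I * (y * Complex.I)) ^ 2))) := by
    refine tendsto_integral_filter_of_dominated_convergence sech ?_ ?_ integrable_sech ?_
    · exact Eventually.of_forall fun ε => Continuous.aestronglyMeasurable (by fun_prop)
    · filter_upwards [self_mem_nhdsWithin] with ε hε
      refine Eventually.of_forall fun s => ?_
      rw [norm_mul, Complex.norm_real, Real.norm_of_nonneg (sech_pos s).le, Complex.norm_exp]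
      refine mul_le_of_le_one_right (sech_pos s).le (Real.exp_le_one_iff.2 ?_)
      have : (-π / (ε + β * Complex.I) * (s + Complex.I * (y * Complex.I)) ^ 2 : ℂ)
          = ((-(π * (s - y) ^ 2) : ℝ) : ℂ) * (ε + β * Complex.I : ℂ)⁻¹ := by
        rw [show Complex.I * (y * Complex.I) = -y by
          linear_combination (y : ℂ) * Complex.I_mul_I]
        push_cast; ring
      rw [this, Complex.re_ofReal_mul, Complex.inv_re]
      have hε' : (0:ℝ) < ε := hε
      have := Real.pi_pos
      have h3 : (ε + β * Complex.I : ℂ).re = ε := by simp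
      rw [h3]
      have := Complex.normSq_nonneg (ε + β * Complex.I)
      rw [neg_mul, Left.neg_nonpos_iff]; positivity
    · refine Eventually.of_forall fun s => ?_
      exact tendsto_const_nhds.mul ((Complex.continuous_exp.tendsto _).comp
        ((tendsto_const_nhds.div hlim hb0).mul tendsto_const_nhds))
  have h3 : Tendsto (fun ε : ℝ => 1 / (ε + β * Complex.I : ℂ) ^ (1 / 2 : ℂ)) (𝓝[>] 0)
      (𝓝 (1 / (β * Complex.I : ℂ) ^ (1 / 2 : ℂ))) := by
    refine tendsto_const_nhds.div ?_ ?_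
    · exact (continuousAt_cpow_const (Or.inr (by simpa using hβ))).tendsto.comp hlim
    · simp [Complex.cpow_eq_zero_iff, hβ]
  have h4 := tendsto_nhds_unique_of_eventuallyEq h1 (h3.mul h2) (by
    filter_upwards [self_mem_nhdsWithin] with ε hε
    exact sech_gaussian_duality (by simpa using hε) _)
  rw [h4]
  congr 2
  ext s
  rw [show Complex.I * (y * Complex.I) = -y by
          linear_combination (y : ℂ) * Complex.I_mul_I, ← sub_eq_add_neg]

lemma integral_symm (f : ℝ → ℂ) (hf : Integrable f) :
    ∫ x, f x = ∫ x, (f x + f (-x)) / 2 := by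
  rw [integral_div, integral_add hf hf.comp_neg, integral_neg_eq_self]
  ring

/-- The relation that lets a symmetrization remove `sech` from an integrand. -/
lemma exp_add_exp_neg_mul_sech (x : ℝ) :
    (Complex.exp (π * x) + Complex.exp (-(π * x))) * (sech x : ℂ) = 2 := by
  have h : (Real.cosh (π * x) : ℂ) ≠ 0 := by exact_mod_cast (Real.cosh_pos _).ne'
  rw [sech, Complex.ofReal_div, Complex.ofReal_one, mul_one_div, div_eq_iff h,
    Complex.ofReal_cosh, Complex.cosh]
  push_cast; ring

lemma integrable_sech_mul {f : ℝ → ℂ} (hf : Integrable f) :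
    Integrable fun x => (sech x : ℂ) * f x := by
  refine hf.bdd_mul (c := 1) (by fun_prop : Continuous fun x => (sech x : ℂ)).aestronglyMeasurable
    (Eventually.of_forall fun x => ?_)
  rw [Complex.norm_real, Real.norm_of_nonneg (sech_pos x).le]
  exact sech_le x

/-- The Mordell integral with parameter `τ = i b` has an elementary value at the
half period `τ / 2`. -/
lemma mordell_at_half_period {b : ℂ} (hb : 0 < b.re) :
    ∫ x : ℝ, (sech x : ℂ) * Complex.exp (-π * b * x ^ 2 + 2 * π * (-Complex.I * b / 2) * x)
      = Complex.exp (-π * b / 4) := by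
  have hb0 : b ≠ 0 := by rintro rfl; simp at hb
  have hinv : 0 < (π / b : ℂ).re := by
    rw [div_eq_mul_inv, Complex.re_ofReal_mul, Complex.inv_re]
    have : 0 < Complex.normSq b := Complex.normSq_pos.2 hb0
    have := Real.pi_pos
    positivity
  rw [sech_gaussian_duality hb]
  have h1 : ∀ s : ℝ, (sech s : ℂ) * Complex.exp (-π / b * (s + Complex.I * (-Complex.I * b / 2)) ^ 2)
      = Complex.exp (-π * b / 4) *
        ((sech s : ℂ) * Complex.exp (-(π / b) * s ^ 2 + (-π) * s + 0)) := by
    intro s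
    rw [mul_left_comm, ← Complex.exp_add]
    congr 2
    have : Complex.I * (-Complex.I * b / 2) = b / 2 := by
      linear_combination (-b / 2) * Complex.I_mul_I
    rw [this]; field_simp; ring
  simp_rw [h1]
  rw [integral_const_mul, integral_symm _ (integrable_sech_mul
    (integrable_cexp_quadratic hinv _ _))]
  have h2 : ∀ s : ℝ, ((sech s : ℂ) * Complex.exp (-(π / b) * s ^ 2 + (-π) * s + 0) +
      (sech (-s) : ℂ) * Complex.exp (-(π / b) * (-s : ℝ) ^ 2 + (-π) * (-s : ℝ) + 0)) / 2
      = Complex.exp (-(π / b) * s ^ 2) := by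
    intro s
    rw [sech_neg]
    push_cast
    have := exp_add_exp_neg_mul_sech s
    rw [show -(π / b) * (s : ℂ) ^ 2 + (-π) * s + 0 = -(π / b) * (s : ℂ) ^ 2 + -(π * s) by ring,
      show -(π / b) * (-s : ℂ) ^ 2 + (-π) * (-s) + 0 = -(π / b) * (s : ℂ) ^ 2 + (π * s) by ring,
      Complex.exp_add, Complex.exp_add]
    linear_combination (Complex.exp (-(π / b) * s ^ 2) / 2) * this
  simp_rw [h2]
  have hpi : (π : ℂ) ≠ 0 := by exact_mod_cast Real.pi_ne_zero
  rw [integral_gaussian_complex hinv, show (π / (π / b) : ℂ) = b by field_simp]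
  have : b ^ (1 / 2 : ℂ) ≠ 0 := by simp [Complex.cpow_eq_zero_iff, hb0]
  field_simp

/-- The integral of `mordell_at_half_period` and this one differ by a factor `exp (2πx)` in the
integrand, so `sech` cancels in their sum, which is a Gaussian integral. -/
lemma mordell_shifted {b : ℂ} (hb : 0 < b.re) :
    ∫ x : ℝ, (sech x : ℂ) * Complex.exp (-π * b * x ^ 2 + (2 * π - π * Complex.I * b) * x)
      = 2 * ((1 / b) ^ (1 / 2 : ℂ) * Complex.exp (π * (1 - Complex.I * b) ^ 2 / (4 * b)))
        - Complex.exp (-π * b / 4) := by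
  have hb0 : b ≠ 0 := by rintro rfl; simp at hb
  have hpi : (π : ℂ) ≠ 0 := by exact_mod_cast Real.pi_ne_zero
  have hb' : 0 < (π * b : ℂ).re := by
    rw [Complex.re_ofReal_mul]; exact mul_pos Real.pi_pos hb
  rw [eq_sub_iff_add_eq, ← mordell_at_half_period hb, ← integral_add]
  · have hI := integral_cexp_quadratic (b := -(π * b)) (by simpa using hb')
      (π * (1 - Complex.I * b)) 0
    have e : (π * (1 - Complex.I * b) ^ 2 / (4 * b) : ℂ)
        = 0 - (π * (1 - Complex.I * b)) ^ 2 / (4 * -(π * b)) := by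
      field_simp; ring
    have e2 : (1 / b : ℂ) = π / - -(π * b) := by rw [neg_neg]; field_simp
    rw [e, e2, ← hI, ← integral_const_mul]
    congr 1
    ext x
    rw [show -π * b * x ^ 2 + (2 * π - π * Complex.I * b) * x =
        (-(π * b) * x ^ 2 + (π * (1 - Complex.I * b)) * x + 0) + π * x by ring,
      show -π * b * x ^ 2 + 2 * π * (-Complex.I * b / 2) * x =
        (-(π * b) * x ^ 2 + (π * (1 - Complex.I * b)) * x + 0) + -(π * x) by ring,
      Complex.exp_add _ (π * x : ℂ), Complex.exp_add _ (-(π * x) : ℂ)]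
    linear_combination Complex.exp (-(π * b) * x ^ 2 + (π * (1 - Complex.I * b)) * x + 0) *
      exp_add_exp_neg_mul_sech x
  · have := integrable_sech_mul (integrable_cexp_quadratic hb'
      (2 * π - π * Complex.I * b) 0)
    simpa using this
  · have := integrable_sech_mul (integrable_cexp_quadratic hb'
      (2 * π * (-Complex.I * b / 2)) 0)
    simpa using this

/-! ### The factorized double integral -/

/-- The oscillating factor `exp (3πi x² / 2)`. -/
noncomputable def fresnel (x : ℝ) : ℂ := Complex.exp ((3 * π / 2 * x ^ 2 : ℝ) * Complex.I)

lemma norm_fresnel (x : ℝ) : ‖fresnel x‖ = 1 := Complex.norm_exp_ofReal_mul_I _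

lemma fresnel_neg (x : ℝ) : fresnel (-x) = fresnel x := by simp [fresnel]

@[fun_prop]
lemma continuous_fresnel : Continuous fresnel := by unfold fresnel; fun_prop

/-- The limit `b → -3i/2` of `mordell_shifted`, symmetrized in `x`. -/
lemma mordell_value :
    ∫ x : ℝ, fresnel x * (Real.cosh (π * x / 2) * sech x : ℝ) =
      2 * ((2 * Complex.I / 3) ^ (1 / 2 : ℂ) * Complex.exp (π * Complex.I / 24))
        - Complex.exp (3 * π * Complex.I / 8) := by
  set b₀ : ℂ := -(3 / 2) * Complex.I with hb₀
  have hb0 : b₀ ≠ 0 := by simp [hb₀]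
  have hI := Complex.I_sq
  have hlim : Tendsto (fun ε : ℝ => (ε + b₀ : ℂ)) (𝓝[>] 0) (𝓝 b₀) := by
    have : Continuous fun ε : ℝ => (ε + b₀ : ℂ) := by fun_prop
    simpa using (this.tendsto 0).mono_left nhdsWithin_le_nhds
  have hb4 : 4 * b₀ ≠ 0 := mul_ne_zero (by norm_num) hb0
  have hslit : 1 / b₀ ∈ Complex.slitPlane := by
    refine Or.inr ?_
    rw [show 1 / b₀ = (2 / 3 : ℝ) * Complex.I by
      rw [div_eq_iff hb0, hb₀]; push_cast; linear_combination hI]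
    simp
  -- the right-hand side of `mordell_shifted` at `b = ε + b₀`
  have hR := ((((tendsto_const_nhds (x := (1 : ℂ))).div hlim hb0).cpow
      (tendsto_const_nhds (x := (1 / 2 : ℂ))) hslit).mul
      ((Complex.continuous_exp.tendsto _).comp (((((tendsto_const_nhds (x := (1 : ℂ))).sub
        ((tendsto_const_nhds (x := Complex.I)).mul hlim)).pow 2).const_mul (π : ℂ)).div
          (hlim.const_mul 4) hb4))).const_mul 2 |>.sub
      ((Complex.continuous_exp.tendsto _).comp ((hlim.const_mul (-π : ℂ)).div_const 4))
  -- for `b = ε + b₀` the integrand has modulus `sech x * exp (-π ε x² + π x / 2)`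
  have hL : Tendsto (fun ε : ℝ => ∫ x : ℝ, (sech x : ℂ) * Complex.exp
      (-π * (ε + b₀) * x ^ 2 + (2 * π - π * Complex.I * (ε + b₀)) * x)) (𝓝[>] 0)
      (𝓝 (∫ x : ℝ, (sech x : ℂ) * Complex.exp
        (-π * b₀ * x ^ 2 + (2 * π - π * Complex.I * b₀) * x))) := by
    refine tendsto_integral_filter_of_dominated_convergence
      (fun x => 2 * (Real.cosh (π * x / 2) * sech x)) ?_ ?_ (integrable_cosh_sech.const_mul 2) ?_
    · exact Eventually.of_forall fun ε => Continuous.aestronglyMeasurable (by fun_prop)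
    · filter_upwards [self_mem_nhdsWithin] with ε hε
      refine Eventually.of_forall fun x => ?_
      rw [norm_mul, Complex.norm_real, Real.norm_of_nonneg (sech_pos x).le, Complex.norm_exp]
      have : (-π * (ε + b₀) * x ^ 2 + (2 * π - π * Complex.I * (ε + b₀)) * x : ℂ)
          = ((-(π * ε * x ^ 2) + π * x / 2 : ℝ) : ℂ) +
            ((3 / 2 * π * x ^ 2 - π * ε * x : ℝ) : ℂ) * Complex.I := by
        rw [hb₀]; push_cast; linear_combination (3 / 2 * π * x) * hI
      rw [this]
      simp only [Complex.add_re, Complex.ofReal_re, Complex.re_ofReal_mul, Complex.I_re, mul_zero,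
        add_zero]
      have hε' : (0:ℝ) < ε := hε
      have hpi := Real.pi_pos
      have h1 : Real.exp (-(π * ε * x ^ 2) + π * x / 2) ≤ Real.exp (π * x / 2) := by
        rw [Real.exp_le_exp]
        have : 0 ≤ π * ε * x ^ 2 := by positivity
        linarith
      have h2 : Real.exp (π * x / 2) ≤ 2 * Real.cosh (π * x / 2) := by
        rw [Real.cosh_eq]; have := Real.exp_pos (-(π * x / 2)); linarith
      have := sech_pos x
      nlinarith
    · refine Eventually.of_forall fun x => ?_
      exact tendsto_const_nhds.mul ((Complex.continuous_exp.tendsto _).comp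
        (((hlim.const_mul _).mul_const _).add
          ((tendsto_const_nhds.sub (hlim.const_mul _)).mul_const _)))
  have h := tendsto_nhds_unique_of_eventuallyEq hL hR (by
    filter_upwards [self_mem_nhdsWithin] with ε hε
    exact mordell_shifted (by simpa [hb₀] using hε))
  have h3 : ∀ x : ℝ, (sech x : ℂ) * Complex.exp
        (-π * b₀ * x ^ 2 + (2 * π - π * Complex.I * b₀) * x) =
        (sech x : ℂ) * (fresnel x * Complex.exp (π * x / 2)) := by
    intro x
    rw [fresnel, ← Complex.exp_add]
    congr 2
    rw [hb₀]; push_cast; linear_combination (3 / 2 * π * x) * hI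
  simp_rw [h3] at h
  have hint : Integrable fun x : ℝ => (sech x : ℂ) * (fresnel x * Complex.exp (π * x / 2)) := by
    refine (integrable_cosh_sech.const_mul 2).mono' (Continuous.aestronglyMeasurable (by fun_prop))
      (Eventually.of_forall fun x => ?_)
    rw [norm_mul, norm_mul, norm_fresnel, Complex.norm_real, Real.norm_of_nonneg (sech_pos x).le,
      show (π * x / 2 : ℂ) = ((π * x / 2 : ℝ) : ℂ) by push_cast; ring, ← Complex.ofReal_exp,
      Complex.norm_real, Real.norm_of_nonneg (Real.exp_pos _).le]
    have h2 : Real.exp (π * x / 2) ≤ 2 * Real.cosh (π * x / 2) := by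
      rw [Real.cosh_eq]; have := Real.exp_pos (-(π * x / 2)); linarith
    have := sech_pos x
    nlinarith
  rw [integral_symm _ hint] at h
  have h4 : ∀ x : ℝ, ((sech x : ℂ) * (fresnel x * Complex.exp (π * x / 2)) + (sech (-x) : ℂ) *
      (fresnel (-x) * Complex.exp (π * (-x : ℝ) / 2))) / 2 =
      fresnel x * (Real.cosh (π * x / 2) * sech x : ℝ) := by
    intro x
    rw [sech_neg, fresnel_neg]
    push_cast
    rw [Complex.cosh, show (π * -(x : ℂ) / 2) = -(π * x / 2) by ring]
    ring
  simp_rw [h4] at h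
  rw [h]
  have e1 : 1 / b₀ = 2 * Complex.I / 3 := by
    rw [div_eq_iff hb0, hb₀]; linear_combination hI
  have e2 : π * (1 - Complex.I * b₀) ^ 2 / (4 * b₀) = π * Complex.I / 24 := by
    have : Complex.I * b₀ = 3 / 2 := by rw [hb₀]; linear_combination -(3 / 2) * hI
    rw [this, div_eq_iff hb4, hb₀]; linear_combination (π / 4) * hI
  have e3 : -π * b₀ / 4 = 3 * π * Complex.I / 8 := by rw [hb₀]; ring
  rw [e1, e2, e3]

/-- The integral over `y`, transformed by `sech_fresnel_duality`, the substitution `q = 2 s - x` and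
the symmetrization `q ↦ -q`. -/
lemma inner_integral (x : ℝ) :
    ∫ y : ℝ, (sech y : ℂ) * Complex.exp
        (-π * ((1 / 6 : ℝ) * Complex.I) * y ^ 2 + 2 * π * ((x / 2 : ℝ) * Complex.I) * y) =
      1 / ((1 / 6 : ℝ) * Complex.I) ^ (1 / 2 : ℂ) * ∫ q : ℝ, fresnel q *
        (Real.cosh (π * x / 2) * Real.cosh (π * q / 2) /
          (Real.cosh (π * x) + Real.cosh (π * q)) : ℝ) := by
  rw [sech_fresnel_duality (by norm_num) (x / 2)]
  congr 1
  have h1 : ∀ s : ℝ, (sech s : ℂ) * Complex.exp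
      (-π / ((1 / 6 : ℝ) * Complex.I) * (s - (x / 2 : ℝ)) ^ 2) =
      (fun q : ℝ => (sech ((q + x) / 2) : ℂ) * fresnel q) (2 * s - x) := by
    intro s
    simp only [fresnel]
    rw [show (2 * s - x + x) / 2 = s by ring]
    congr 2
    have : -π / ((1 / 6 : ℝ) * Complex.I) = 6 * π * Complex.I := by
      rw [div_eq_iff (by simp)]; push_cast; linear_combination (-π) * Complex.I_sq
    rw [this]; push_cast; ring
  simp_rw [h1]
  rw [Measure.integral_comp_mul_left (fun u : ℝ =>
    (fun q : ℝ => (sech ((q + x) / 2) : ℂ) * fresnel q) (u - x)) 2,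
    integral_sub_right_eq_self (fun q : ℝ => (sech ((q + x) / 2) : ℂ) * fresnel q) x]
  have hint : Integrable fun q : ℝ => (sech ((q + x) / 2) : ℂ) * fresnel q := by
    have h := (integrable_sech.comp_div (two_ne_zero)).comp_add_right x
    refine h.mono' (Continuous.aestronglyMeasurable (by fun_prop))
      (Eventually.of_forall fun q => ?_)
    rw [norm_mul, norm_fresnel, Complex.norm_real, Real.norm_of_nonneg (sech_pos _).le, mul_one]
  rw [integral_symm _ hint, abs_of_pos (by norm_num : (0:ℝ) < 2⁻¹), Complex.real_smul,
    ← integral_const_mul]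
  congr 1
  ext q
  rw [fresnel_neg]
  have key : (2⁻¹ : ℝ) * ((sech ((q + x) / 2) + sech ((-q + x) / 2)) / 2) =
      Real.cosh (π * x / 2) * Real.cosh (π * q / 2) /
          (Real.cosh (π * x) + Real.cosh (π * q)) := by
    unfold sech
    set v := π * x / 2
    set w := π * q / 2
    rw [show π * ((q + x) / 2) = v + w by simp only [v, w]; ring,
      show π * ((-q + x) / 2) = v - w by simp only [v, w]; ring,
      show π * x = (v + w) + (v - w) by simp only [v, w]; ring,
      show π * q = (v + w) - (v - w) by simp only [v, w]; ring]
    have hv : Real.cosh v * Real.cosh w = (Real.cosh (v + w) + Real.cosh (v - w)) / 2 := by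
      rw [Real.cosh_add, Real.cosh_sub]; ring
    rw [hv, Real.cosh_add (v + w), Real.cosh_sub (v + w)]
    have h1 := Real.cosh_pos (v + w)
    have h2 := Real.cosh_pos (v - w)
    ring_nf
    field_simp
    ring
  rw [← key]
  push_cast
  ring

/-- The absolutely integrable kernel of the transformed double integral. -/
noncomputable def kern (p : ℝ × ℝ) : ℂ :=
  fresnel p.1 * fresnel p.2 * (Real.cosh (π * p.1 / 2) * Real.cosh (π * p.2 / 2) * sech p.1 /
    (Real.cosh (π * p.1) + Real.cosh (π * p.2)) : ℝ)

lemma kern_add_swap (p : ℝ × ℝ) : kern p + kern p.swap =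
    (fresnel p.1 * (Real.cosh (π * p.1 / 2) * sech p.1 : ℝ)) *
      (fresnel p.2 * (Real.cosh (π * p.2 / 2) * sech p.2 : ℝ)) := by
  have h1 := Real.cosh_pos (π * p.1)
  have h2 := Real.cosh_pos (π * p.2)
  have key : Real.cosh (π * p.1 / 2) * Real.cosh (π * p.2 / 2) * sech p.1 /
    (Real.cosh (π * p.1) + Real.cosh (π * p.2)) +
    Real.cosh (π * p.2 / 2) * Real.cosh (π * p.1 / 2) * sech p.2 /
    (Real.cosh (π * p.2) + Real.cosh (π * p.1)) =
    (Real.cosh (π * p.1 / 2) * sech p.1) * (Real.cosh (π * p.2 / 2) * sech p.2) := by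
    unfold sech
    field_simp
    ring
  have key' := congrArg (fun r : ℝ => (r : ℂ)) key
  simp only [Complex.ofReal_add, Complex.ofReal_mul (_ * _) (_ * _)] at key'
  simp only [kern, Prod.fst_swap, Prod.snd_swap]
  linear_combination fresnel p.1 * fresnel p.2 * key'

lemma integrable_kern : Integrable kern (volume.prod volume) := by
  refine (integrable_cosh_sech.mul_prod integrable_cosh_sech).mono' ?_
    (Eventually.of_forall fun p => ?_)
  · apply Continuous.aestronglyMeasurable
    unfold kern
    refine Continuous.mul (by fun_prop) (Complex.continuous_ofReal.comp
      (Continuous.div (by fun_prop) (by fun_prop) fun p => ?_))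
    have h1 := Real.cosh_pos (π * p.1)
    have h2 := Real.cosh_pos (π * p.2)
    positivity
  · have h1 := Real.cosh_pos (π * p.1)
    have h2 := Real.cosh_pos (π * p.2)
    have h3 := Real.cosh_pos (π * p.1 / 2)
    have h4 := Real.cosh_pos (π * p.2 / 2)
    have h5 := sech_pos p.1
    rw [kern, norm_mul, norm_mul, norm_fresnel, norm_fresnel, Complex.norm_real,
      Real.norm_of_nonneg (by positivity), one_mul, one_mul]
    rw [sech, sech, div_le_iff₀ (by positivity)]
    field_simp
    nlinarith

lemma integral_kern : ∫ x : ℝ, ∫ q : ℝ, kern (x, q) =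
    (∫ x : ℝ, fresnel x * (Real.cosh (π * x / 2) * sech x : ℝ)) ^ 2 / 2 := by
  have h := integral_prod_mul (μ := (volume : Measure ℝ)) (ν := (volume : Measure ℝ))
    (fun x : ℝ => fresnel x * (Real.cosh (π * x / 2) * sech x : ℝ))
    (fun x : ℝ => fresnel x * (Real.cosh (π * x / 2) * sech x : ℝ))
  simp_rw [← kern_add_swap] at h
  have hs : Integrable (fun p : ℝ × ℝ => kern p.swap) (volume.prod volume) :=
    integrable_kern.swap
  rw [integral_add integrable_kern hs, integral_prod_swap, integral_prod _ integrable_kern] at h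
  rw [sq, ← h]; ring

/-! ### Evaluation -/

lemma final_value :
    (1 / ((1 / 6 : ℝ) * Complex.I) ^ (1 / 2 : ℂ) *
      ((2 * ((2 * Complex.I / 3) ^ (1 / 2 : ℂ) * Complex.exp (π * Complex.I / 24))
        - Complex.exp (3 * π * Complex.I / 8)) ^ 2 / 2)).re
      = 4 * ((Real.sqrt 3 - 1) / (2 * Real.sqrt 6)) := by
  have hI := Complex.I_sq
  have h3 : (0:ℝ) < √3 := by positivity
  have h2 : (0:ℝ) < √2 := by positivity
  have h3s : (√3 : ℝ) ^ 2 = 3 := Real.sq_sqrt (by norm_num)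
  have h2s : (√2 : ℝ) ^ 2 = 2 := Real.sq_sqrt (by norm_num)
  have h3c : ((√3 : ℝ) : ℂ) ≠ 0 := by exact_mod_cast h3.ne'
  have h2c : ((√2 : ℝ) : ℂ) ≠ 0 := by exact_mod_cast h2.ne'
  have h3sc : ((√3 : ℝ) : ℂ) ^ 2 = 3 := by exact_mod_cast h3s
  have h2sc : ((√2 : ℝ) : ℂ) ^ 2 = 2 := by exact_mod_cast h2s
  have hi1 : (1 + Complex.I) ≠ 0 := fun h => by simpa using congrArg Complex.re h
  have hg : (2 * Complex.I / 3) ^ (1 / 2 : ℂ) = (1 + Complex.I) / (√3 : ℝ) := by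
    have e : 2 * Complex.I / 3 = ((1 + Complex.I) / (√3 : ℝ)) ^ 2 := by
      rw [div_pow, h3sc]; linear_combination -hI / 3
    rw [e, one_div, Complex.sq_cpow_two_inv]
    rw [Complex.div_ofReal_re]; simp
  have hk : ((1 / 6 : ℝ) * Complex.I) ^ (1 / 2 : ℂ) = (1 + Complex.I) / (2 * √3 : ℝ) := by
    have e : (1 / 6 : ℝ) * Complex.I = ((1 + Complex.I) / (2 * √3 : ℝ)) ^ 2 := by
      push_cast
      rw [div_pow, mul_pow, h3sc]; linear_combination -hI / 12
    rw [e, one_div, Complex.sq_cpow_two_inv]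
    rw [Complex.div_ofReal_re]; simp
  set z := Complex.exp (π * Complex.I / 8) with hz
  have hz0 : z ≠ 0 := Complex.exp_ne_zero _
  have hz2 : z ^ 2 = (1 + Complex.I) / (√2 : ℝ) := by
    rw [hz, ← Complex.exp_nat_mul, show ((2 : ℕ) : ℂ) * (π * Complex.I / 8) =
      (π / 4 : ℝ) * Complex.I by push_cast; ring, Complex.exp_mul_I, ← Complex.ofReal_cos,
      ← Complex.ofReal_sin, Real.cos_pi_div_four, Real.sin_pi_div_four]
    push_cast
    field_simp
    linear_combination h2sc
  have hz24 : Complex.exp (π * Complex.I / 24) * z = (√3 : ℝ) / 2 + Complex.I / 2 := by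
    rw [hz, ← Complex.exp_add, show π * Complex.I / 24 + π * Complex.I / 8 =
      (π / 6 : ℝ) * Complex.I by push_cast; ring, Complex.exp_mul_I, ← Complex.ofReal_cos,
      ← Complex.ofReal_sin, Real.cos_pi_div_six, Real.sin_pi_div_six]
    push_cast; ring
  have hz38 : Complex.exp (3 * π * Complex.I / 8) = z ^ 3 := by
    rw [hz, ← Complex.exp_nat_mul]; congr 1; push_cast; ring
  have hz4 : z ^ 4 = Complex.I := by
    rw [show z ^ 4 = (z ^ 2) ^ 2 by ring, hz2, div_pow, h2sc]; linear_combination hI / 2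
  rw [hg, hk, hz38]
  -- multiplying by `z = exp (πi/8)` moves all phases to multiples of `π/6` and `π/4`
  have hP : (2 * ((1 + Complex.I) / (√3 : ℝ) * Complex.exp (π * Complex.I / 24)) - z ^ 3) * z
      = (1 - 1 / √3 : ℝ) + (1 / √3 : ℝ) * Complex.I := by
    have : (2 * ((1 + Complex.I) / (√3 : ℝ) * Complex.exp (π * Complex.I / 24)) - z ^ 3) * z =
      2 * ((1 + Complex.I) / (√3 : ℝ)) * (Complex.exp (π * Complex.I / 24) * z) - z ^ 4 := by ring
    rw [this, hz24, hz4]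
    push_cast
    field_simp
    linear_combination hI
  have hP2 : (2 * ((1 + Complex.I) / (√3 : ℝ) * Complex.exp (π * Complex.I / 24)) - z ^ 3) ^ 2
      = ((1 - 1 / √3 : ℝ) + (1 / √3 : ℝ) * Complex.I) ^ 2 / z ^ 2 := by
    rw [← hP]; field_simp
  rw [hP2, hz2]
  have h : 1 / ((1 + Complex.I) / (2 * √3 : ℝ)) *
      (((1 - 1 / √3 : ℝ) + (1 / √3 : ℝ) * Complex.I) ^ 2 / ((1 + Complex.I) / (√2 : ℝ)) / 2) =
      ((√3 * √2 / 2 * (2 * (1 - 1 / √3) * (1 / √3)) : ℝ) : ℂ) +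
       ((-(√3 * √2 / 2 * ((1 - 1 / √3) ^ 2 - (1 / √3) ^ 2)) : ℝ) : ℂ) * Complex.I := by
    generalize (1 - 1 / √3 : ℝ) = a
    generalize (1 / √3 : ℝ) = b
    push_cast
    have hd : (1 + Complex.I) * (1 + Complex.I) = 2 * Complex.I := by linear_combination hI
    have hI0 := Complex.I_ne_zero
    rw [show 1 / ((1 + Complex.I) / (2 * ((√3 : ℝ) : ℂ))) *
      (((a : ℂ) + b * Complex.I) ^ 2 / ((1 + Complex.I) / ((√2 : ℝ) : ℂ)) / 2) =
      ((√3 : ℝ) : ℂ) * ((√2 : ℝ) : ℂ) * ((a : ℂ) + b * Complex.I) ^ 2 /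
        ((1 + Complex.I) * (1 + Complex.I)) by field_simp, hd, div_eq_iff (by simp)]
    linear_combination (√3 : ℝ) * (√2 : ℝ) * (a : ℂ) ^ 2 * hI
  rw [h, Complex.add_re, Complex.ofReal_re, Complex.re_ofReal_mul, Complex.I_re, mul_zero, add_zero,
    show (6 : ℝ) = 3 * 2 by norm_num, Real.sqrt_mul (by norm_num)]
  field_simp
  rw [h2s]; ring

/-- No integrability is needed: both sides use the same iterated Bochner integrals. -/
lemma quarter_plane (f : ℝ → ℝ → ℝ) (h : ∀ x y, f |x| |y| = f x y) :
    ∫ x, ∫ y, f x y = 4 * ∫ x in Set.Ioi (0:ℝ), ∫ y in Set.Ioi (0:ℝ), f x y := by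
  have h1 : ∀ x, ∫ y, f x y = 2 * ∫ y in Set.Ioi (0:ℝ), f |x| y := fun x => by
    rw [← integral_comp_abs (f := f |x|)]
    simp_rw [h]
  simp_rw [h1]
  rw [integral_const_mul, integral_comp_abs (f := fun x => ∫ y in Set.Ioi (0:ℝ), f x y)]
  ring

/-- The odd part `sin (π x y)` of `exp (πi x y)` integrates to zero over `y`. -/
lemma inner_re (x : ℝ) :
    ∫ y, Real.cos (π / 2 * (3 * x ^ 2 - y ^ 2 / 3)) * Real.cos (π * x * y) /
          (Real.cosh (π * x) * Real.cosh (π * y)) =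
      (fresnel x * sech x * ∫ y : ℝ, (sech y : ℂ) * Complex.exp
        (-π * ((1 / 6 : ℝ) * Complex.I) * y ^ 2 + 2 * π * ((x / 2 : ℝ) * Complex.I) * y)).re := by
  have hn : ∀ y : ℝ, Complex.exp
        (-π * ((1 / 6 : ℝ) * Complex.I) * y ^ 2 + 2 * π * ((x / 2 : ℝ) * Complex.I) * y) =
      Complex.exp ((-(π / 6 * y ^ 2) : ℝ) * Complex.I) *
        Complex.exp ((π * x * y : ℝ) * Complex.I) := fun y => by
    rw [← Complex.exp_add]; congr 1; push_cast; ring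
  have hint : Integrable fun y : ℝ => (sech y : ℂ) * Complex.exp
        (-π * ((1 / 6 : ℝ) * Complex.I) * y ^ 2 + 2 * π * ((x / 2 : ℝ) * Complex.I) * y) := by
    refine integrable_sech.mono' (Continuous.aestronglyMeasurable (by fun_prop))
      (Eventually.of_forall fun y => ?_)
    rw [hn, norm_mul, norm_mul, Complex.norm_exp_ofReal_mul_I, Complex.norm_exp_ofReal_mul_I,
      Complex.norm_real, Real.norm_of_nonneg (sech_pos y).le, mul_one, mul_one]
  rw [integral_symm _ hint, ← integral_const_mul]
  have hint2 := ((hint.add hint.comp_neg).div_const 2).const_mul (fresnel x * sech x)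
  refine Eq.trans ?_ (integral_re hint2)
  congr 1
  ext y
  simp only [Pi.add_apply, hn, sech_neg, fresnel]
  have e : ((-(π / 6 * (-y) ^ 2) : ℝ) : ℂ) = (-(π / 6 * y ^ 2) : ℝ) := by push_cast; ring
  have e2 : ((π * x * -y : ℝ) : ℂ) = -(π * x * y : ℝ) := by push_cast; ring
  have e3 : (Complex.exp ((3 * π / 2 * x ^ 2 : ℝ) * Complex.I) * sech x *
      ((sech y * (Complex.exp ((-(π / 6 * y ^ 2) : ℝ) * Complex.I) *
        Complex.exp ((π * x * y : ℝ) * Complex.I)) +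
      sech y * (Complex.exp ((-(π / 6 * (-y) ^ 2) : ℝ) * Complex.I) *
        Complex.exp ((π * x * -y : ℝ) * Complex.I))) / 2)) =
      ((sech x * sech y * Real.cos (π * x * y) : ℝ) : ℂ) *
        Complex.exp ((π / 2 * (3 * x ^ 2 - y ^ 2 / 3) : ℝ) * Complex.I) := by
    rw [e, e2, show ((π / 2 * (3 * x ^ 2 - y ^ 2 / 3) : ℝ) : ℂ) * Complex.I =
      (3 * π / 2 * x ^ 2 : ℝ) * Complex.I + (-(π / 6 * y ^ 2) : ℝ) * Complex.I by
        push_cast; ring, Complex.exp_add]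
    simp only [Complex.ofReal_mul (_ * _) (Real.cos _), Complex.ofReal_cos, Complex.cos]
    simp only [Complex.ofReal_mul (sech x)]
    ring
  rw [e3]
  show _ = Complex.re _
  rw [Complex.re_ofReal_mul, Complex.exp_ofReal_mul_I_re, sech, sech]
  have h1 := Real.cosh_pos (π * x)
  have h2 := Real.cosh_pos (π * y)
  field_simp

theorem stmt_17 :
    (∫ x in Set.Ioi (0:ℝ), ∫ y in Set.Ioi (0:ℝ),
        Real.cos (π / 2 * (3 * x ^ 2 - y ^ 2 / 3)) * Real.cos (π * x * y) /
          (Real.cosh (π * x) * Real.cosh (π * y)))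
      = (Real.sqrt 3 - 1) / (2 * Real.sqrt 6) := by
  have h4 := quarter_plane (fun x y => Real.cos (π / 2 * (3 * x ^ 2 - y ^ 2 / 3)) *
    Real.cos (π * x * y) / (Real.cosh (π * x) * Real.cosh (π * y))) (fun x y => by
      have a : Real.cosh (π * |x|) = Real.cosh (π * x) := by
        rw [← Real.cosh_abs (π * x), abs_mul, abs_of_pos Real.pi_pos]
      have b : Real.cosh (π * |y|) = Real.cosh (π * y) := by
        rw [← Real.cosh_abs (π * y), abs_mul, abs_of_pos Real.pi_pos]
      have c : Real.cos (π * |x| * |y|) = Real.cos (π * x * y) := by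
        rw [← Real.cos_abs (π * x * y), abs_mul, abs_mul, abs_of_pos Real.pi_pos]
      simp only [a, b, c, sq_abs])
  set k : ℂ := 1 / ((1 / 6 : ℝ) * Complex.I) ^ (1 / 2 : ℂ) with hk
  have hx : ∀ x : ℝ, fresnel x * sech x * (k * ∫ q : ℝ, fresnel q *
        (Real.cosh (π * x / 2) * Real.cosh (π * q / 2) /
          (Real.cosh (π * x) + Real.cosh (π * q)) : ℝ)) = k * ∫ q : ℝ, kern (x, q) := fun x => by
    rw [mul_left_comm, ← integral_const_mul]
    congr 2
    ext q
    simp only [kern]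
    push_cast
    ring
  have hre : (∫ x : ℝ, (k * ∫ q : ℝ, kern (x, q)).re) = (∫ x : ℝ, k * ∫ q : ℝ, kern (x, q)).re :=
    integral_re (integrable_kern.integral_prod_left.const_mul k)
  simp_rw [inner_re, inner_integral, ← hk, hx] at h4
  rw [hre, integral_const_mul, integral_kern, mordell_value, hk, final_value] at h4
  linarith
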